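/- arXiv:1410.3997 — 3 statements merged into one kernel-verified Lean document; each statement's English description precedes it below -/
import Mathlib

section
/- Let f : ℝ² → ℝ² be an orientation preserving (equivalently, isotopic to the identity) reversible homeomorphism of the plane. If f has a symmetric periodic point (a point z with f^k(z) = z and f^ℓ(z) = I(z) for some integers k, ℓ ≥ 1), then f has a symmetric fixed point, i.e., there exists w ∈ ℝ² with f(w) = w and I(w) = w. -/
open Set

noncomputable section

/-- The reflection `I(x,y) = (-x,y)` on the plane. -/
def refl2 : ℝ × ℝ → ℝ × ℝ := fun p => (-p.1, p.2)

/-- A self-homeomorphism `f` of the plane is isotopic to the identity: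
there is a continuous `H : [0,1] × ℝ² → ℝ²` such that each `H(s,·)` is a
homeomorphism, `H(0,·) = id` and `H(1,·) = f`. -/
def IsotopicToIdPlane (f : (ℝ × ℝ) ≃ₜ (ℝ × ℝ)) : Prop :=
  ∃ H : (Set.Icc (0:ℝ) 1) × (ℝ × ℝ) → ℝ × ℝ, Continuous H ∧
    (∀ s, ∃ e : (ℝ × ℝ) ≃ₜ (ℝ × ℝ), ∀ z, H (s, z) = e z) ∧
    (∀ z, H (⟨0, by norm_num⟩, z) = z) ∧
    (∀ z, H (⟨1, by norm_num⟩, z) = f z)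

/-!
Suppose that `f` has no fixed point on the axis of the reflection `I`. If some axis point `A` were
sent to an axis point `B`, reversibility would give `f B = A`; along the axis from `A` to `B` the
points `x` and `I (f x)` never meet but exchange their places, so the direction from one to the
other turns by an odd multiple of `π`. This angle does not change when the pair is carried along
the isotopy, but at its end, where the pair has become `f x` and `x`, the turning is that of the
mirror image, hence the opposite angle: a contradiction. So `f` moves the axis off itself, to one
side of it. By reversibility the closed half-plane on that side is sent into its interior, so no
periodic orbit contains both a point and its mirror image.
-/

theorem exists_continuous_log {X : Type*} [TopologicalSpace X] [SimplyConnectedSpace X]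
    [LocallyPathConnectedSpace X] {G : X → ℂ} (hG : Continuous G) (hne : ∀ x, G x ≠ 0) :
    ∃ g : X → ℂ, Continuous g ∧ ∀ x, Complex.exp (g x) = G x := by
  obtain ⟨g, hg, hexp⟩ := Complex.exists_continuousOn_eqOn_exp_comp
    (Homeomorph.Set.univ X).toHomotopyEquiv.simplyConnectedSpace isOpen_univ hG.continuousOn
    (by simpa using hne)
  exact ⟨g, continuousOn_univ.mp hg, fun x => hexp (mem_univ x)⟩

theorem eq_of_exp_comp_eq_const {X : Type*} [TopologicalSpace X] [PreconnectedSpace X]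
    {h : X → ℂ} (hh : Continuous h) {c : ℂ} (hc : ∀ x, Complex.exp (h x) = c) (x y : X) :
    h x = h y :=
  Complex.isCoveringMap_exp.const_of_comp hh
    (fun x y => Subtype.ext ((hc x).trans (hc y).symm)) x y

section Winding

variable {S Y : Type*} [TopologicalSpace S] [TopologicalSpace Y] [ContractibleSpace S]
  [ContractibleSpace Y] [LocallyPathConnectedSpace (S × Y)] {a b : Y} {p q : S}

/- The variation of `log G` from `a` to `b` along `{s} × Y` is a logarithm of `c` which does not
depend on `s`; comparing `s = p` with `s = q` shows that it is its own conjugate. -/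
theorem exists_exp_eq_of_mul_of_conj {G : S × Y → ℂ} (hG : Continuous G) (hne : ∀ x, G x ≠ 0)
    {c : ℂ} (hmul : ∀ s, G (s, b) = c * G (s, a))
    (hconj : ∀ y, G (q, y) = (starRingEnd ℂ) (G (p, y))) :
    ∃ r : ℝ, (Real.exp r : ℂ) = c := by
  obtain ⟨g, hg, hexp⟩ := exists_continuous_log hG hne
  have exp_variation (s : S) : Complex.exp (g (s, b) - g (s, a)) = c := by
    rw [Complex.exp_sub, hexp, hexp, hmul, mul_div_cancel_right₀ _ (hne _)]
  have variation_eq : g (q, b) - g (q, a) = g (p, b) - g (p, a) :=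
    eq_of_exp_comp_eq_const (by fun_prop) exp_variation q p
  have exp_sub_conj (y : Y) : Complex.exp (g (q, y) - (starRingEnd ℂ) (g (p, y))) = 1 := by
    rw [Complex.exp_sub, Complex.exp_conj, hexp, hexp, ← hconj, div_self (hne _)]
  have sub_conj_eq :
      g (q, b) - (starRingEnd ℂ) (g (p, b)) = g (q, a) - (starRingEnd ℂ) (g (p, a)) :=
    eq_of_exp_comp_eq_const (by fun_prop) exp_sub_conj b a
  have conj_variation : (starRingEnd ℂ) (g (p, b) - g (p, a)) = g (p, b) - g (p, a) := by
    rw [map_sub]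
    linear_combination variation_eq - sub_conj_eq
  obtain ⟨r, hr⟩ := Complex.conj_eq_iff_real.mp conj_variation
  exact ⟨r, by rw [Complex.ofReal_exp, ← hr, exp_variation]⟩

theorem exists_eq_of_swap_of_conj {X : Type*} [TopologicalSpace X] {H : S × X → ℂ}
    (hH : Continuous H) (hinj : ∀ s, Function.Injective fun x => H (s, x)) {γ δ : Y → X}
    (hγ : Continuous γ) (hδ : Continuous δ) (hγδ : γ b = δ a) (hδγ : δ b = γ a)
    (hconj : ∀ y, H (q, γ y) - H (q, δ y) = (starRingEnd ℂ) (H (p, γ y) - H (p, δ y))) :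
    ∃ y, γ y = δ y := by
  by_contra! hne
  obtain ⟨r, hr⟩ := exists_exp_eq_of_mul_of_conj (a := a) (b := b) (c := -1)
    (G := fun x : S × Y => H (x.1, γ x.2) - H (x.1, δ x.2)) (by fun_prop)
    (fun x => sub_ne_zero.mpr fun h => hne x.2 (hinj x.1 h))
    (fun s => by simp only [hγδ, hδγ]; ring) hconj
  have : Real.exp r = -1 := by exact_mod_cast hr
  linarith [Real.exp_pos r]

end Winding

/-- Reversibility of `f` with respect to `I`: the relation `f ∘ I = I ∘ f⁻¹`, written without the
inverse so that it makes sense for every self-map. -/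
def IsReversible {X : Type*} (I f : X → X) : Prop := ∀ z, f (I (f z)) = I z

namespace IsReversible

variable {X : Type*} {I f : X → X}

theorem apply_apply_eq_self (h : IsReversible I f) {z : X} (hz : I z = z)
    (hfz : I (f z) = f z) : f (f z) = z := by
  rw [← hfz, h, hz]

theorem apply_pos_of_nonneg [TopologicalSpace X] {φ : X → ℝ} (h : IsReversible I f)
    (hf : Continuous f) (hφ : Continuous φ) (hφI : ∀ z, φ (I z) = -φ z)
    (hconn : IsPreconnected {z | 0 ≤ φ z}) {z₀ : X} (hz₀ : φ z₀ = 0)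
    (hpos : ∀ z, φ z = 0 → 0 < φ (f z)) {z : X} (hz : 0 ≤ φ z) : 0 < φ (f z) := by
  by_contra! hneg
  obtain ⟨w, hw, hfw⟩ : ∃ w, 0 ≤ φ w ∧ φ (f w) = 0 :=
    hconn.intermediate_value hz hz₀.ge (hφ.comp hf).continuousOn ⟨hneg, (hpos z₀ hz₀).le⟩
  have hIw : 0 < φ (I w) := by
    rw [← h w]
    exact hpos _ (by rw [hφI, hfw, neg_zero])
  linarith [hφI w]

end IsReversible

theorem mem_of_iterate_mem_of_isPeriodicPt {α : Type*} {f : α → α} {s : Set α} (hs : MapsTo f s s)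
    {z : α} {k : ℕ} (hk : 0 < k) (hz : Function.IsPeriodicPt f k z) {n : ℕ}
    (hn : f^[n] z ∈ s) : z ∈ s := by
  have hreturn : f^[k * n - n] (f^[n] z) = z := by
    rw [← Function.iterate_add_apply, Nat.sub_add_cancel (Nat.le_mul_of_pos_left n hk)]
    exact hz.mul_const n
  exact hreturn ▸ hs.iterate _ hn

theorem iterate_ne_of_apply_pos_of_nonneg {X : Type*} {I f : X → X} {φ : X → ℝ}
    (hφI : ∀ z, φ (I z) = -φ z) (hpos : ∀ z, 0 ≤ φ z → 0 < φ (f z)) {z : X} {k : ℕ} (hk : 0 < k)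
    (hz : Function.IsPeriodicPt f k z) (l : ℕ) : f^[l] z ≠ I z := by
  intro hl
  have hmaps : MapsTo f {w | 0 ≤ φ w} {w | 0 ≤ φ w} := fun w hw => (hpos w hw).le
  have hz_nonneg : 0 ≤ φ z := by
    rcases le_total 0 (φ z) with h | h
    · exact h
    · exact mem_of_iterate_mem_of_isPeriodicPt hmaps hk hz
        (show 0 ≤ φ (f^[l] z) by rw [hl, hφI]; linarith)
  have hz_pos : 0 < φ z := by
    obtain ⟨k, rfl⟩ := Nat.exists_eq_add_one_of_ne_zero hk.ne'
    rw [← hz.eq, Function.iterate_succ_apply']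
    exact hpos _ (hmaps.iterate k hz_nonneg)
  have hl_nonneg : 0 ≤ φ (f^[l] z) := hmaps.iterate l hz_nonneg
  rw [hl, hφI] at hl_nonneg
  linarith

theorem mul_pos_of_continuous_of_ne_zero {X : Type*} [TopologicalSpace X] [PreconnectedSpace X]
    {h : X → ℝ} (hh : Continuous h) (hne : ∀ x, h x ≠ 0) (x y : X) : 0 < h x * h y := by
  by_contra! hxy
  obtain ⟨w, hw⟩ : (0 : ℝ) ∈ range h := by
    rcases mul_nonpos_iff.mp hxy with ⟨hx, hy⟩ | ⟨hx, hy⟩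
    · exact mem_range_of_exists_le_of_exists_ge hh ⟨y, hy⟩ ⟨x, hx⟩
    · exact mem_range_of_exists_le_of_exists_ge hh ⟨x, hx⟩ ⟨y, hy⟩
  exact hne w hw

theorem continuous_refl2 : Continuous refl2 := by
  unfold refl2
  fun_prop

theorem refl2_refl2 (z : ℝ × ℝ) : refl2 (refl2 z) = z := by simp [refl2]

theorem refl2_eq_self_iff {z : ℝ × ℝ} : refl2 z = z ↔ z.1 = 0 := by
  simp [refl2, Prod.ext_iff, neg_eq_self]

theorem IsotopicToIdPlane.exists_real_parametrization {f : (ℝ × ℝ) ≃ₜ (ℝ × ℝ)}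
    (hiso : IsotopicToIdPlane f) :
    ∃ H : ℝ × (ℝ × ℝ) → ℝ × ℝ, Continuous H ∧ (∀ s, Function.Injective fun z => H (s, z)) ∧
      (∀ z, H (0, z) = z) ∧ ∀ z, H (1, z) = f z := by
  obtain ⟨H, hH, hhomeo, hH₀, hH₁⟩ := hiso
  have hinj (s) : Function.Injective fun z => H (s, z) := by
    obtain ⟨e, he⟩ := hhomeo s
    simpa only [he] using e.injective
  refine ⟨fun x => H (projIcc 0 1 zero_le_one x.1, x.2), ?_, fun s => ?_, fun z => ?_,
    fun z => ?_⟩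
  · exact hH.comp ((continuous_projIcc.comp continuous_fst).prodMk continuous_snd)
  · exact hinj (projIcc 0 1 zero_le_one s)
  · simpa only [projIcc_left] using hH₀ z
  · simpa only [projIcc_right] using hH₁ z

theorem exists_symmetric_fixedPoint_of_refl2_apply_eq {f : (ℝ × ℝ) ≃ₜ (ℝ × ℝ)}
    (hrev : IsReversible refl2 f) (hiso : IsotopicToIdPlane f) {z : ℝ × ℝ} (hz : refl2 z = z)
    (hfz : refl2 (f z) = f z) : ∃ w, f w = w ∧ refl2 w = w := by
  obtain ⟨H, hH, hinj, hH₀, hH₁⟩ := hiso.exists_real_parametrization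
  have haxis (t : ℝ) : refl2 (0, t) = (0, t) := refl2_eq_self_iff.mpr rfl
  have eq_of_axis {w : ℝ × ℝ} (hw : refl2 w = w) : (0, w.2) = w :=
    Prod.ext (refl2_eq_self_iff.mp hw).symm rfl
  have hffz : f (f z) = z := hrev.apply_apply_eq_self hz hfz
  obtain ⟨t, ht⟩ : ∃ t : ℝ, refl2 (f (0, t)) = (0, t) := by
    refine exists_eq_of_swap_of_conj (p := (0 : ℝ)) (q := (1 : ℝ)) (a := z.2) (b := (f z).2)
      (H := fun x => Complex.equivRealProdCLM.symm (H x)) (by fun_prop)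
      (fun s => Complex.equivRealProdCLM.symm.injective.comp (hinj s))
      (continuous_refl2.comp (by fun_prop)) (by fun_prop) ?_ ?_ fun t => ?_
    · rw [eq_of_axis hfz, eq_of_axis hz, hffz, hz]
    · rw [eq_of_axis hfz, eq_of_axis hz, hfz]
    · simp only [hH₀, hH₁, hrev (0, t), haxis]
      apply Complex.ext <;> simp [refl2, neg_add_eq_sub]
  exact ⟨(0, t), by rw [← refl2_refl2 (f (0, t)), ht, haxis], haxis t⟩

theorem isPreconnected_nonneg_mul_fst (c : ℝ) : IsPreconnected {z : ℝ × ℝ | 0 ≤ c * z.1} :=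
  (convex_halfSpace_ge (c • LinearMap.fst ℝ ℝ ℝ).isLinear 0).isPreconnected

/-- **Proposition 4.3 (Brouwer's lemma for reversible maps).** An orientation
preserving (isotopic to the identity) reversible homeomorphism of the plane
with a symmetric periodic point has a symmetric fixed point. -/
theorem brouwer_lemma_reversible
    (f : (ℝ × ℝ) ≃ₜ (ℝ × ℝ))
    (hrev : ∀ z, f (refl2 z) = refl2 (f.symm z))
    (hiso : IsotopicToIdPlane f)
    (hper : ∃ (z : ℝ × ℝ) (k l : ℕ), 1 ≤ k ∧ 1 ≤ l ∧
      (⇑f)^[k] z = z ∧ (⇑f)^[l] z = refl2 z) :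
    ∃ w : ℝ × ℝ, f w = w ∧ refl2 w = w := by
  by_contra! hno
  have hrevf : IsReversible refl2 f := fun z => by rw [hrev, f.symm_apply_apply]
  have hmoved (t : ℝ) : (f (0, t)).1 ≠ 0 := fun ht =>
    have ⟨w, hfw, hw⟩ := exists_symmetric_fixedPoint_of_refl2_apply_eq hrevf hiso
      (refl2_eq_self_iff.mpr rfl) (refl2_eq_self_iff.mpr ht)
    hno w hfw hw
  -- The factor makes `φ` positive on the side to which `f` moves the origin.
  let φ : ℝ × ℝ → ℝ := fun z => (f (0, 0)).1 * z.1
  have hφ_refl (z : ℝ × ℝ) : φ (refl2 z) = -φ z := mul_neg _ _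
  have haxis (z : ℝ × ℝ) (hz : φ z = 0) : 0 < φ (f z) := by
    obtain ⟨x, t⟩ := z
    obtain rfl : x = 0 := (mul_eq_zero.mp hz).resolve_left (hmoved 0)
    exact mul_pos_of_continuous_of_ne_zero (by fun_prop : Continuous fun t => (f (0, t)).1)
      hmoved 0 t
  have hhalf (z : ℝ × ℝ) (hz : 0 ≤ φ z) : 0 < φ (f z) :=
    hrevf.apply_pos_of_nonneg f.continuous (by fun_prop) hφ_refl
      (isPreconnected_nonneg_mul_fst _) (z₀ := (0, 0)) (mul_zero _) haxis hz
  obtain ⟨z, k, l, hk, -, hzk, hzl⟩ := hper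
  exact iterate_ne_of_apply_pos_of_nonneg hφ_refl hhalf hk hzk l hzl
end
end

section
/- Let Ω ⊆ ℝ² be an invariant domain and let f : Ω → Ω be a reversible homeomorphism isotopic to the identity. Suppose z = (0,y) ∈ Fix I_Ω satisfies f²(z) = z (so z is a symmetric 2-periodic point lying on Fix I_Ω), and suppose z and f(z) lie on the same connected component of Fix I_Ω. Then there exists a symmetric fixed point of f on the closed straight segment [z, f(z)] ⊆ Fix I_Ω joining z and f(z), i.e., a point w on this segment with f(w) = w (and automatically I(w) = w). -/
open Set

noncomputable section

lemma refl2_mem_of_inv {Ω : Set (ℝ × ℝ)} (hinv : refl2 '' Ω = Ω) {p : ℝ × ℝ}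
    (hp : p ∈ Ω) : refl2 p ∈ Ω := by
  rw [← hinv]; exact Set.mem_image_of_mem _ hp

/-- An invariant domain: a connected subset `Ω ⊆ ℝ²` with `I(Ω) = Ω` and
`int(cl Ω) ⊆ Ω ⊆ cl(int Ω)`. -/
structure IsInvariantDomain (Ω : Set (ℝ × ℝ)) : Prop where
  connected : IsConnected Ω
  inv : refl2 '' Ω = Ω
  int_cl_subset : interior (closure Ω) ⊆ Ω
  subset_cl_int : Ω ⊆ closure (interior Ω)

/-- A self-homeomorphism `f` of a set `Ω ⊆ ℝ²` is isotopic to the identity. -/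
def IsotopicToId {Ω : Set (ℝ × ℝ)} (f : Ω ≃ₜ Ω) : Prop :=
  ∃ H : (Set.Icc (0:ℝ) 1) × Ω → Ω, Continuous H ∧
    (∀ s, ∃ e : Ω ≃ₜ Ω, ∀ z, H (s, z) = e z) ∧
    (∀ z, H (⟨0, by norm_num⟩, z) = z) ∧
    (∀ z, H (⟨1, by norm_num⟩, z) = f z)

/-!
Suppose `f` has no fixed point on a connected set `C` of axis points containing `z` and `f z`, and
let `F` be an isotopy from the inclusion to `f`. By injectivity, `E s w = F s w - F s (f⁻¹ w)` does
not vanish on `C`. Since `f⁻¹` exchanges `z` and `f z`, every `E s` takes opposite values at these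
two points. On the axis, reversibility reads `f = I ∘ f⁻¹`; identifying `ℝ²` with `ℂ`, this says
that `E 1` is the complex conjugate of `E 0`. Such a deformation is impossible: lifting `E s / E 0`
through `exp` gives `conj (E 0) = E 0 * exp ℓ` with `ℓ z = ℓ (f z)`, so `E 0 * exp (ℓ / 2)` is a
continuous square root of `‖E 0‖²`, hence has constant sign, yet takes opposite values at `z`
and `f z`.
-/

open scoped unitInterval ComplexConjugate

section NonvanishingHomotopy

variable {A : Type*} [TopologicalSpace A]

lemma exists_eq_mul_exp_of_homotopy (E : C(I × A, ℂ)) (hE : ∀ p, E p ≠ 0) :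
    ∃ L : C(I × A, ℂ), (∀ a, L (0, a) = 0) ∧
      ∀ s a, E (s, a) = E (0, a) * Complex.exp (L (s, a)) := by
  let ratio : C(I × A, {w : ℂ // w ≠ 0}) :=
    ⟨fun p => ⟨E p / E (0, p.2), div_ne_zero (hE _) (hE _)⟩,
      .subtype_mk (.div (by fun_prop) (by fun_prop) fun _ => hE _) _⟩
  have ratio_zero (a : A) : ratio (0, a) = ⟨Complex.exp 0, Complex.exp_ne_zero 0⟩ :=
    Subtype.ext (by simp [ratio, hE])
  let L := Complex.isCoveringMap_exp.liftHomotopy ratio (.const A 0) ratio_zero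
  refine ⟨L, Complex.isCoveringMap_exp.liftHomotopy_zero _ _ ratio_zero, fun s a => ?_⟩
  have exp_L : Complex.exp (L (s, a)) = E (s, a) / E (0, a) := congrArg Subtype.val <|
    congrFun (Complex.isCoveringMap_exp.liftHomotopy_lifts _ _ ratio_zero) (s, a)
  rw [exp_L, mul_div_cancel₀ _ (hE _)]

lemma eq_of_conj_eq_mul_exp [PreconnectedSpace A] {g l : A → ℂ} (hg : Continuous g)
    (hl : Continuous l) (hg0 : ∀ x, g x ≠ 0) (hconj : ∀ x, conj (g x) = g x * Complex.exp (l x))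
    {a b : A} (hnorm : ‖g a‖ = ‖g b‖) (hlab : l a = l b) : g a = g b := by
  let r : A → ℂ := fun x => g x * Complex.exp (l x / 2)
  have r_sq : EqOn (r ^ 2) ((fun x => (‖g x‖ : ℂ)) ^ 2) univ := fun x _ => calc
    r x ^ 2 = g x * (g x * Complex.exp (l x)) := by
      rw [mul_pow, ← Complex.exp_nat_mul, Nat.cast_ofNat, mul_div_cancel₀ _ two_ne_zero]; ring
    _ = (‖g x‖ : ℂ) ^ 2 := by rw [← hconj, Complex.mul_conj']
  have r_eq : r a = r b := by
    rcases isPreconnected_univ.eq_or_eq_neg_of_sq_eq (by fun_prop) (by fun_prop) r_sq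
      (fun {x} _ => by simpa using hg0 x) with h | h <;>
    simp [h (mem_univ a), h (mem_univ b), hnorm]
  simpa only [r, hlab, mul_left_inj' (Complex.exp_ne_zero _)] using r_eq

theorem not_homotopy_conj_of_antipodal [PreconnectedSpace A] (E : C(I × A, ℂ)) (hE : ∀ p, E p ≠ 0)
    {a b : A} (hanti : ∀ s, E (s, b) = -E (s, a)) :
    ¬ ∀ x, E (1, x) = conj (E (0, x)) := by
  intro hconj
  obtain ⟨L, L_zero, hL⟩ := exists_eq_mul_exp_of_homotopy E hE
  have exp_L_eq (s : I) : Complex.exp (L (s, a)) = Complex.exp (L (s, b)) := by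
    have h := hanti s
    rw [hL s a, hL s b, hanti 0, neg_mul, neg_inj] at h
    exact (mul_left_cancel₀ (hE _) h).symm
  have L_eq : (fun s => L (s, a)) = fun s => L (s, b) :=
    Complex.isCoveringMap_exp.eq_of_comp_eq (by fun_prop) (by fun_prop)
      (funext fun s => Subtype.ext (exp_L_eq s)) 0 (by rw [L_zero, L_zero])
  have E_eq : E (0, a) = E (0, b) :=
    eq_of_conj_eq_mul_exp (g := fun x => E (0, x)) (l := fun x => L (1, x)) (by fun_prop)
      (by fun_prop) (fun _ => hE _) (fun x => by rw [← hconj, hL 1 x])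
      (by rw [hanti, norm_neg]) (congrFun L_eq 1)
  exact hE (0, a) (self_eq_neg.mp (E_eq.trans (hanti 0)))

theorem exists_eq_of_injective_homotopy_conj [PreconnectedSpace A] {X : Type*} [TopologicalSpace X]
    (F : C(I × X, ℂ)) (hF : ∀ s, Function.Injective fun x => F (s, x)) (γ δ : C(A, X))
    {a b : A} (hab : γ a = δ b) (hba : γ b = δ a)
    (hconj : ∀ x, F (1, γ x) - F (1, δ x) = conj (F (0, γ x) - F (0, δ x))) :
    ∃ x, γ x = δ x := by
  by_contra! hne
  let E : C(I × A, ℂ) := ⟨fun p => F (p.1, γ p.2) - F (p.1, δ p.2), by fun_prop⟩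
  refine not_homotopy_conj_of_antipodal E (fun p => sub_ne_zero.mpr ((hF p.1).ne (hne p.2)))
    (a := a) (b := b) (fun s => ?_) hconj
  simp only [E, ContinuousMap.coe_mk, hab, hba, neg_sub]

end NonvanishingHomotopy

section Segment

variable {V : Type*} [AddCommGroup V] [Module ℝ V] [TopologicalSpace V]

lemma segment_subset_of_isPreconnected_of_injOn {C K : Set V} (φ : V →L[ℝ] ℝ)
    (hC : IsPreconnected C) (hCK : C ⊆ K) (hK : Convex ℝ K) (hφ : InjOn φ K) {a b : V}
    (ha : a ∈ C) (hb : b ∈ C) : segment ℝ a b ⊆ C := by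
  intro p hp
  have hφp : φ p ∈ segment ℝ (φ a) (φ b) :=
    image_segment ℝ φ.toLinearMap.toAffineMap a b ▸ mem_image_of_mem φ hp
  obtain ⟨q, hq, hqp⟩ := (hC.image φ φ.continuous.continuousOn).ordConnected.convex.segment_subset
    (mem_image_of_mem φ ha) (mem_image_of_mem φ hb) hφp
  have hqp' : q = p := hφ (hCK hq) (hK.segment_subset (hCK ha) (hCK hb) hp) hqp
  exact hqp' ▸ hq

lemma segment_subset_of_connectedComponentIn_eq {S K : Set V} (φ : V →L[ℝ] ℝ) (hSK : S ⊆ K)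
    (hK : Convex ℝ K) (hφ : InjOn φ K) {a b : V} (ha : a ∈ S)
    (hab : connectedComponentIn S a = connectedComponentIn S b) : segment ℝ a b ⊆ S := by
  have ha' : a ∈ connectedComponentIn S a := mem_connectedComponentIn ha
  have hb : b ∈ S := connectedComponentIn_nonempty_iff.mp ⟨a, hab ▸ ha'⟩
  have hb' : b ∈ connectedComponentIn S a := hab ▸ mem_connectedComponentIn hb
  have hS := connectedComponentIn_subset S a
  exact (segment_subset_of_isPreconnected_of_injOn φ isPreconnected_connectedComponentIn
    (hS.trans hSK) hK hφ ha' hb').trans hS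

end Segment

lemma refl2_eq_self_iff_s13 {p : ℝ × ℝ} : refl2 p = p ↔ p.1 = 0 := by
  simp only [refl2, Prod.ext_iff, and_true, neg_eq_self]

lemma equivRealProdCLM_symm_refl2 (p : ℝ × ℝ) :
    Complex.equivRealProdCLM.symm (refl2 p) = -conj (Complex.equivRealProdCLM.symm p) := by
  apply Complex.ext <;> simp [refl2]

theorem exists_fixed_point_mem_of_isPreconnected {Ω : Set (ℝ × ℝ)} (f : Ω ≃ₜ Ω)
    (F : C(I × Ω, ℝ × ℝ)) (hF0 : ∀ w, F (0, w) = w) (hF1 : ∀ w, F (1, w) = f w)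
    (hF : ∀ s, Function.Injective fun w => F (s, w)) {C : Set Ω} (hC : IsPreconnected C)
    (hCfix : ∀ w ∈ C, refl2 w = w) (hfC : ∀ w ∈ C, (f w : ℝ × ℝ) = refl2 (f.symm w))
    {z : Ω} (hz : z ∈ C) (hfz : f z ∈ C) (hper : f (f z) = z) : ∃ w ∈ C, f w = w := by
  have : PreconnectedSpace C := isPreconnected_iff_preconnectedSpace.mp hC
  let κ := Complex.equivRealProdCLM.symm
  obtain ⟨w, hw⟩ := exists_eq_of_injective_homotopy_conj
    (F := ⟨fun p => κ (F p), by fun_prop⟩) (fun s => κ.injective.comp (hF s))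
    (γ := ⟨Subtype.val, continuous_subtype_val⟩) (δ := ⟨fun w : C => f.symm w, by fun_prop⟩)
    (a := ⟨z, hz⟩) (b := ⟨f z, hfz⟩) (f.symm_apply_apply z).symm
    (f.eq_symm_apply.mpr hper) fun w => by
      change κ (F (1, w)) - κ (F (1, f.symm w)) = conj (κ (F (0, w)) - κ (F (0, f.symm w)))
      calc
        _ = κ (refl2 (f.symm w)) - κ (refl2 w) := by
          rw [hF1, hF1, f.apply_symm_apply, hfC w w.2, hCfix w w.2]
        _ = conj (κ w - κ (f.symm w)) := by
          rw [equivRealProdCLM_symm_refl2, equivRealProdCLM_symm_refl2, map_sub]; ring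
        _ = _ := by rw [hF0, hF0]
  exact ⟨w, w.2, f.eq_symm_apply.mp hw⟩

theorem symmetric_two_periodic_gives_symmetric_fixed_point_general {Ω : Set (ℝ × ℝ)}
    (hinv : MapsTo refl2 Ω Ω) (f : Ω ≃ₜ Ω)
    (hrev : ∀ w : Ω, (f ⟨refl2 w, hinv w.2⟩ : ℝ × ℝ) = refl2 (f.symm w))
    (F : C(I × Ω, ℝ × ℝ)) (hF0 : ∀ w, F (0, w) = w) (hF1 : ∀ w, F (1, w) = f w)
    (hF : ∀ s, Function.Injective fun w => F (s, w))
    (z : Ω) (hz : (z : ℝ × ℝ).1 = 0) (h2per : f (f z) = z)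
    (hcomp : connectedComponentIn (Ω ∩ {p : ℝ × ℝ | p.1 = 0}) (z : ℝ × ℝ)
      = connectedComponentIn (Ω ∩ {p : ℝ × ℝ | p.1 = 0}) (f z : ℝ × ℝ)) :
    ∃ w : Ω, (w : ℝ × ℝ) ∈ segment ℝ (z : ℝ × ℝ) (f z : ℝ × ℝ) ∧
      f w = w ∧ refl2 (w : ℝ × ℝ) = (w : ℝ × ℝ) := by
  have axis_convex : Convex ℝ {p : ℝ × ℝ | p.1 = 0} :=
    convex_hyperplane (LinearMap.fst ℝ ℝ ℝ).isLinear 0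
  have snd_injOn : InjOn (ContinuousLinearMap.snd ℝ ℝ ℝ) {p : ℝ × ℝ | p.1 = 0} :=
    fun p hp q hq hpq => Prod.ext (hp.trans hq.symm) hpq
  have segment_subset : segment ℝ (z : ℝ × ℝ) (f z) ⊆ Ω ∩ {p | p.1 = 0} :=
    segment_subset_of_connectedComponentIn_eq (ContinuousLinearMap.snd ℝ ℝ ℝ) inter_subset_right
      axis_convex snd_injOn ⟨z.2, hz⟩ hcomp
  let C : Set Ω := Subtype.val ⁻¹' segment ℝ (z : ℝ × ℝ) (f z)
  have C_preconnected : IsPreconnected C :=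
    Topology.IsInducing.subtypeVal.isPreconnected_image.mp <| by
      rw [Subtype.image_preimage_coe, inter_eq_right.mpr (segment_subset.trans inter_subset_left)]
      exact (convex_segment _ _).isPreconnected
  have C_fix : ∀ w ∈ C, refl2 w = w := fun w hw => refl2_eq_self_iff_s13.mpr (segment_subset hw).2
  obtain ⟨w, hw, hfw⟩ := exists_fixed_point_mem_of_isPreconnected f F hF0 hF1 hF C_preconnected
    C_fix (fun w hw => by simpa only [C_fix w hw] using hrev w) (left_mem_segment ..)
    (right_mem_segment ..) h2per
  exact ⟨w, hw, hfw, C_fix w hw⟩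

/-- **Proposition 4.4.** Let `f` be a reversible homeomorphism of an invariant
domain `Ω` isotopic to the identity with a symmetric 2-periodic point
`z = (0,y) ∈ Fix I_Ω`. If `z` and `f(z)` lie on the same connected component of
`Fix I_Ω`, then there is a symmetric fixed point of `f` on the segment
`[z, f(z)] ⊆ Fix I_Ω`. -/
theorem symmetric_two_periodic_gives_symmetric_fixed_point
    (Ω : Set (ℝ × ℝ)) (hΩ : IsInvariantDomain Ω)
    (f : Ω ≃ₜ Ω)
    (hrev : ∀ z : Ω,
      (f ⟨refl2 z, refl2_mem_of_inv hΩ.inv z.2⟩ : ℝ × ℝ) = refl2 (f.symm z))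
    (hiso : IsotopicToId f)
    (z : Ω) (hz : (z : ℝ × ℝ).1 = 0)
    (h2per : f (f z) = z)
    (hcomp : connectedComponentIn (Ω ∩ {p : ℝ × ℝ | p.1 = 0}) (z : ℝ × ℝ)
      = connectedComponentIn (Ω ∩ {p : ℝ × ℝ | p.1 = 0}) ((f z : Ω) : ℝ × ℝ)) :
    ∃ w : Ω, (w : ℝ × ℝ) ∈ segment ℝ (z : ℝ × ℝ) ((f z : Ω) : ℝ × ℝ) ∧
      f w = w ∧ refl2 (w : ℝ × ℝ) = (w : ℝ × ℝ) := by
  obtain ⟨H, hH, hhomeo, hH0, hH1⟩ := hiso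
  have H_injective (s : I) : Function.Injective fun w => (H (s, w) : ℝ × ℝ) := by
    obtain ⟨e, he⟩ := hhomeo s
    simpa only [he, Function.comp_def] using Subtype.val_injective.comp e.injective
  exact symmetric_two_periodic_gives_symmetric_fixed_point_general
    (fun _ => refl2_mem_of_inv hΩ.inv) f hrev ⟨fun p => H p, by fun_prop⟩
    (fun w => congrArg Subtype.val (hH0 w)) (fun w => congrArg Subtype.val (hH1 w)) H_injective
    z hz h2per hcomp
end
end

section
/- Let f : A → A be an area preserving reversible homeomorphism of the closed annulus A which is isotopic to the identity. If f has an odd-periodic point (some z ∈ A and odd integer k ≥ 1 with f^k(z) = z), then f has an interior symmetric odd-periodic point, i.e., a point z in the interior Å with f^k(z) = z for some odd k ≥ 1 and f^ℓ(z) = I(z) for some integer ℓ ≥ 1. -/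
open MeasureTheory Set

noncomputable section

/-- The Euclidean norm `|z| = √(x² + y²)` on `ℝ²`. -/
def enorm2 (p : ℝ × ℝ) : ℝ := Real.sqrt (p.1 ^ 2 + p.2 ^ 2)

/-- The closed annulus `A = {z : 1 ≤ |z| ≤ 2}`. -/
def annulus : Set (ℝ × ℝ) := {p | 1 ≤ enorm2 p ∧ enorm2 p ≤ 2}

/-- The open annulus `Å = {z : 1 < |z| < 2}`, the interior of `A`. -/
def annulusInt : Set (ℝ × ℝ) := {p | 1 < enorm2 p ∧ enorm2 p < 2}

lemma enorm2_refl2 (p : ℝ × ℝ) : enorm2 (refl2 p) = enorm2 p := by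
  simp [enorm2, refl2, neg_sq]

lemma refl2_mem_annulus {p : ℝ × ℝ} (h : p ∈ annulus) : refl2 p ∈ annulus := by
  simpa [annulus, enorm2_refl2] using h

/-- The restriction `I_A` of the reflection to the closed annulus. -/
def IA : annulus → annulus := fun z => ⟨refl2 z, refl2_mem_annulus z.2⟩

open Filter Function Topology
open scoped unitInterval ComplexConjugate

/-!
A suitable lift `φ` to the strip of a reversible map of the cylinder isotopic to the identity is
reversible with respect to `J (x, y) = (-x, y)`. If the axis `x = 0` contains a point `p` whose
image is on the axis, it contains a fixed point. Otherwise, as `z` runs from `p` to `φ p` on the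
axis, the vector from the image of `z` to that of `J (φ z)` under a map of the isotopy makes a
half-integer number of turns, which does not change along the isotopy, although the vectors at the
two ends of the isotopy are mirror images of each other and turn by opposite amounts.

So if `φ` has no fixed point on the axis, it moves the whole axis to one side, say the right, hence
maps the right half strip into itself, and no orbit goes back by a fundamental domain. Recurrence
yields an orbit which climbs infinitely many fundamental domains. A fixed point of `φ`, obtained
from the odd-periodic point after replacing the map by an odd iterate, forbids this unless an odd
iterate of `φ` moves a point of the axis by exactly one turn.
-/

/-! ### Logarithms of nonvanishing maps -/

theorem exists_continuous_exp_eq {X : Type*} [TopologicalSpace X] [SimplyConnectedSpace X]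
    [LocallyPathConnectedSpace X] {D : X → ℂ} (hD : Continuous D) (h0 : ∀ x, D x ≠ 0) :
    ∃ L : X → ℂ, Continuous L ∧ ∀ x, Complex.exp (L x) = D x := by
  obtain ⟨x₀⟩ : Nonempty X := inferInstance
  obtain ⟨L, ⟨-, hL⟩, -⟩ := Complex.isCoveringMapOn_exp.existsUnique_continuousMap_lifts
    ⟨D, hD⟩ (Complex.exp_log (h0 x₀)) (fun x => h0 x)
  exact ⟨L, L.continuous, congrFun hL⟩

theorem sub_eq_sub_of_exp_eq_mul_exp {X : Type*} [TopologicalSpace X] [PreconnectedSpace X]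
    {k : ℂ} {L M : X → ℂ} (hL : Continuous L) (hM : Continuous M)
    (h : ∀ x, Complex.exp (L x) = k * Complex.exp (M x)) (x y : X) : L x - L y = M x - M y := by
  have hk : ∀ x, Complex.exp (L x - M x) = k := fun x => by
    rw [Complex.exp_sub, h, mul_div_cancel_right₀ _ (Complex.exp_ne_zero _)]
  have hconst : L x - M x = L y - M y := Complex.isCoveringMap_exp.const_of_comp (hL.sub hM)
    (fun x y => Subtype.ext ((hk x).trans (hk y).symm)) x y
  linear_combination hconst

/-- The winding of a path in `ℂ \ {0}` is a homotopy invariant as long as the ratio of its end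
points is kept. -/
theorem exists_log_increment_eq {D : I × I → ℂ} (hD : Continuous D) (h0 : ∀ p, D p ≠ 0) {c : ℂ}
    (hc : ∀ s, D (s, 1) = c * D (s, 0)) :
    ∃ L M : I → ℂ, Continuous L ∧ Continuous M ∧ (∀ t, Complex.exp (L t) = D (0, t)) ∧
      (∀ t, Complex.exp (M t) = D (1, t)) ∧ L 1 - L 0 = M 1 - M 0 := by
  have : ContractibleSpace I := (convex_Icc (0 : ℝ) 1).contractibleSpace
    ⟨0, unitInterval.zero_mem⟩
  have : LocallyPathConnectedSpace I := (convex_Icc (0 : ℝ) 1).locallyPathConnectedSpace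
  obtain ⟨L, hL, hexp⟩ := exists_continuous_exp_eq hD h0
  refine ⟨fun t => L (0, t), fun t => L (1, t), by fun_prop, by fun_prop, fun t => hexp _,
    fun t => hexp _, ?_⟩
  have h := sub_eq_sub_of_exp_eq_mul_exp (k := c) (L := fun s : I => L (s, 1))
    (M := fun s : I => L (s, 0)) (by fun_prop) (by fun_prop)
    (fun s => by rw [hexp, hexp, hc]) 0 1
  linear_combination h

/-- The increment of `log D` along either end path is real by conjugation symmetry, while its
exponential is `-1`. -/
theorem exists_ne_conj_of_antiperiodic {D : I × I → ℂ} (hD : Continuous D)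
    (h0 : ∀ p, D p ≠ 0) (hanti : ∀ s, D (s, 1) = -D (s, 0)) :
    ∃ t, D (0, t) ≠ conj (D (1, t)) := by
  by_contra! hconj
  obtain ⟨L, M, hL, hM, hexpL, hexpM, hLM⟩ :=
    exists_log_increment_eq hD h0 (c := -1) (fun s => by rw [hanti, neg_one_mul])
  have hMc : Continuous fun t => conj (M t) := Complex.continuous_conj.comp hM
  have hreal : conj (M 1 - M 0) = M 1 - M 0 := by
    rw [map_sub, ← hLM]
    refine (sub_eq_sub_of_exp_eq_mul_exp (k := 1) hL hMc (fun t => ?_) 1 0).symm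
    rw [hexpL, hconj, Complex.exp_conj, hexpM, one_mul]
  obtain ⟨r, hr⟩ := Complex.conj_eq_iff_real.1 hreal
  have hexp : Complex.exp (M 1 - M 0) = -1 := by
    rw [Complex.exp_sub, hexpM, hexpM, hanti, neg_div, div_self (h0 _)]
  rw [hr, ← Complex.ofReal_exp] at hexp
  have hexp_real : Real.exp r = -1 := by exact_mod_cast hexp
  linarith [Real.exp_pos r]

/-- A loop in a closed half plane without its boundary point `0` has a continuous logarithm, so it
does not wind around `0`. -/
theorem exists_mul_re_neg_of_circle_homotopy {D : I × I → ℂ} (hD : Continuous D)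
    (h0 : ∀ p, D p ≠ 0) (hloop : ∀ s, D (s, 1) = D (s, 0)) {r : ℂ}
    (hcirc : ∀ t : I, D (0, t) = r * Complex.exp (2 * Real.pi * Complex.I * (t : ℝ)))
    {a : ℂ} (ha : a ≠ 0) : ∃ t, (a * D (1, t)).re < 0 := by
  by_contra! hhalf
  obtain ⟨L, M, hL, hM, hexpL, hexpM, hLM⟩ :=
    exists_log_increment_eq hD h0 (c := 1) (fun s => by rw [hloop, one_mul])
  have hslit : ∀ t, a * D (1, t) ∈ Complex.slitPlane := fun t => by
    rw [Complex.mem_slitPlane_iff]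
    rcases (hhalf t).lt_or_eq with h | h
    · exact Or.inl h
    · exact Or.inr fun him => mul_ne_zero ha (h0 (1, t)) (Complex.ext h.symm him)
  have hM_log := sub_eq_sub_of_exp_eq_mul_exp (k := a)
    (L := fun t : I => Complex.log (a * D (1, t))) (Continuous.clog (by fun_prop) hslit) hM
    (fun t => by rw [hexpM, Complex.exp_log (mul_ne_zero ha (h0 _))]) 1 0
  have hL_circ := sub_eq_sub_of_exp_eq_mul_exp (k := r) hL
    (M := fun t : I => 2 * Real.pi * Complex.I * (t : ℝ)) (by fun_prop)
    (fun t => by rw [hexpL, hcirc]) 1 0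
  simp only [hloop, Set.Icc.coe_zero, Set.Icc.coe_one, Complex.ofReal_zero,
    Complex.ofReal_one] at hM_log hL_circ
  exact Complex.two_pi_I_ne_zero (by linear_combination hLM - hL_circ - hM_log)

/-! ### Isotopies through injective maps -/

/-- The self-map `g` is joined to the identity by a continuous family of injective self-maps; the
intermediate maps need not be surjective. -/
def IsInjIsotopicToId {X : Type*} [TopologicalSpace X] (g : X → X) : Prop :=
  ∃ F : I × X → X, Continuous F ∧ (∀ s, Injective fun x => F (s, x)) ∧
    (∀ x, F (0, x) = x) ∧ ∀ x, F (1, x) = g x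

namespace IsInjIsotopicToId

variable {X Y : Type*} [TopologicalSpace X] [TopologicalSpace Y] {g h : X → X}

protected theorem continuous (hg : IsInjIsotopicToId g) : Continuous g := by
  obtain ⟨F, hF, -, -, hF1⟩ := hg
  rw [← funext hF1]
  fun_prop

protected theorem id : IsInjIsotopicToId (id : X → X) :=
  ⟨Prod.snd, continuous_snd, fun _ => injective_id, fun _ => rfl, fun _ => rfl⟩

protected theorem comp (hg : IsInjIsotopicToId g) (hh : IsInjIsotopicToId h) :
    IsInjIsotopicToId (g ∘ h) := by
  obtain ⟨F, hF, hFinj, hF0, hF1⟩ := hg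
  obtain ⟨G, hG, hGinj, hG0, hG1⟩ := hh
  exact ⟨fun p => F (p.1, G p), by fun_prop, fun s => (hFinj s).comp (hGinj s),
    fun x => by simp only [hG0, hF0],
    fun x => by simp only [hG1, hF1, comp_apply]⟩

protected theorem iterate (hg : IsInjIsotopicToId g) (n : ℕ) : IsInjIsotopicToId g^[n] := by
  induction n with
  | zero => exact .id
  | succ n ih => exact ih.comp hg

theorem conj_homeomorph (hg : IsInjIsotopicToId g) (e : X ≃ₜ Y) :
    IsInjIsotopicToId (e ∘ g ∘ e.symm) := by
  obtain ⟨F, hF, hinj, hF0, hF1⟩ := hg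
  exact ⟨fun p => e (F (p.1, e.symm p.2)), by fun_prop,
    fun s => e.injective.comp ((hinj s).comp e.symm.injective),
    fun y => by simp only [hF0, e.apply_symm_apply], fun y => congrArg e (hF1 _)⟩

/-- The vectors from `F s (γ t)` to `F s (J (φ (γ t)))` form an antiperiodic homotopy from a path
to its complex conjugate, so one of them vanishes. -/
theorem exists_fixed_mem_path {φ J : X → X} (hφ : IsInjIsotopicToId φ) (hJ : Continuous J)
    {e : X → ℂ} (he : Continuous e) (hinj : Injective e) (heJ : ∀ x, e (J x) = -conj (e x))
    (hrev : ∀ x, φ (J (φ x)) = J x) {γ : I → X} (hγ : Continuous γ) (hγJ : ∀ t, J (γ t) = γ t)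
    (hγ01 : φ (γ 0) = γ 1) : ∃ t, φ (γ t) = γ t := by
  have hφc := hφ.continuous
  obtain ⟨F, hF, hFinj, hF0, hF1⟩ := hφ
  by_contra! hne
  have hJinj : Injective J := fun x y hxy => hinj <| by
    simpa only [heJ, neg_inj, (starRingEnd ℂ).injective.eq_iff] using congrArg e hxy
  have hJφ0 : J (φ (γ 0)) = γ 1 := by rw [hγ01, hγJ]
  have hJφ1 : J (φ (γ 1)) = γ 0 := by rw [← hJφ0, hrev, hγJ, hγJ]
  let D : I × I → ℂ := fun p => e (F (p.1, J (φ (γ p.2)))) - e (F (p.1, γ p.2))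
  obtain ⟨t, ht⟩ := exists_ne_conj_of_antiperiodic (D := D) (by fun_prop)
    (fun p => sub_ne_zero.2 fun heq => hne p.2 <| hJinj <|
      (hFinj p.1 (hinj heq)).trans (hγJ p.2).symm)
    (fun s => by simp only [D, hJφ0, hJφ1, neg_sub])
  refine ht ?_
  have hγ_conj : conj (e (γ t)) = -e (γ t) := by rw [← neg_eq_iff_eq_neg, ← heJ, hγJ]
  simp only [D, hF0, hF1, hrev, heJ, map_sub, map_neg, hγ_conj]
  ring

/-- The image under `φ` of a small circle around an interior point `x` winds around `φ x`, hence
meets every half plane with `φ x` on its boundary. -/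
theorem exists_mul_re_sub_neg {φ : X → X} (hφ : IsInjIsotopicToId φ) {e : X → ℂ}
    (he : IsEmbedding e) {x : X} (hx : range e ∈ 𝓝 (e x)) {a : ℂ} (ha : a ≠ 0) :
    ∃ y, (a * (e (φ y) - e (φ x))).re < 0 := by
  obtain ⟨F, hF, hFinj, hF0, hF1⟩ := hφ
  obtain ⟨ε, hε, hball⟩ := Metric.nhds_basis_closedBall.mem_iff.1 hx
  let circ : I → ℂ := fun t => e x + ε * Complex.exp (2 * Real.pi * Complex.I * (t : ℝ))
  have hcirc : ∀ t, circ t ∈ range e := fun t => hball <| by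
    simp [circ, Complex.norm_exp, abs_of_pos hε]
  choose y hy using hcirc
  have hyc : Continuous y := he.continuous_iff.2 <| by
    rw [show e ∘ y = circ from funext hy]
    fun_prop
  have hec := he.continuous
  have hyx : ∀ t, y t ≠ x := fun t h => by
    simpa [circ, h, hε.ne'] using hy t
  obtain ⟨t, ht⟩ := exists_mul_re_neg_of_circle_homotopy
    (D := fun p => e (F (p.1, y p.2)) - e (F (p.1, x))) (r := ε) (by fun_prop)
    (fun p => sub_ne_zero.2 fun h => hyx p.2 (hFinj p.1 (he.injective h)))
    (fun s => by
      have : y 1 = y 0 := he.injective <| by simp [hy, circ, Complex.exp_two_pi_mul_I]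
      simp only [this])
    (fun t => by simp only [hF0, hy, circ, add_sub_cancel_left]) ha
  exact ⟨y t, by simpa only [hF1] using ht⟩

end IsInjIsotopicToId

/-! ### Reversible lifts on a strip -/

section Strip

variable {Y : Type*} [TopologicalSpace Y]

/-- The deck transformation by `j` full turns of the strip `ℝ × Y`, seen as the universal cover of
the cylinder `Circle × Y`. -/
def deck (j : ℤ) : ℝ × Y ≃ₜ ℝ × Y :=
  (Homeomorph.addRight (j * (2 * Real.pi))).prodCongr (.refl Y)

@[simp]
theorem deck_apply (j : ℤ) (w : ℝ × Y) : deck j w = (w.1 + j * (2 * Real.pi), w.2) := rfl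

theorem deck_deck (i j : ℤ) (w : ℝ × Y) : deck i (deck j w) = deck (i + j) w := by
  ext
  · simp only [deck_apply, Int.cast_add]; ring
  · rfl

theorem deck_zero (w : ℝ × Y) : deck 0 w = w := by
  simp

theorem deck_left_inj {i j : ℤ} {w : ℝ × Y} : deck i w = deck j w ↔ i = j := by
  simp [Prod.ext_iff, Real.pi_ne_zero]

theorem isInjIsotopicToId_deck (j : ℤ) : IsInjIsotopicToId (deck j : ℝ × Y → ℝ × Y) :=
  ⟨fun p => (p.2.1 + (p.1 : ℝ) * (j * (2 * Real.pi)), p.2.2), by fun_prop,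
    fun s => (add_left_injective ((s : ℝ) * (j * (2 * Real.pi)))).prodMap injective_id,
    fun w => by simp, fun w => by simp⟩

/-- The lift to the strip of a reflection of the cylinder. -/
def stripMirror : ℝ × Y ≃ₜ ℝ × Y := (Homeomorph.neg ℝ).prodCongr (.refl Y)

@[simp]
theorem stripMirror_apply (w : ℝ × Y) : stripMirror w = (-w.1, w.2) := rfl

theorem stripMirror_stripMirror (w : ℝ × Y) : stripMirror (stripMirror w) = w := by
  simp

theorem stripMirror_deck (j : ℤ) (w : ℝ × Y) :
    stripMirror (deck j w) = deck (-j) (stripMirror w) := by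
  ext
  · simp only [stripMirror_apply, deck_apply, Int.cast_neg]; ring
  · rfl

/-- The number of the fundamental domain `[2πj, 2π(j+1)) × Y` containing `w`. -/
def sheet (w : ℝ × Y) : ℤ := ⌊w.1 / (2 * Real.pi)⌋

theorem le_sheet_iff {j : ℤ} {w : ℝ × Y} : j ≤ sheet w ↔ 0 ≤ (deck (-j) w).1 := by
  rw [sheet, Int.le_floor, le_div_iff₀ Real.two_pi_pos]
  simp

theorem sheet_nonneg_iff {w : ℝ × Y} : 0 ≤ sheet w ↔ 0 ≤ w.1 := by
  simpa using le_sheet_iff (j := 0) (w := w)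

theorem sheet_deck (j : ℤ) (w : ℝ × Y) : sheet (deck j w) = sheet w + j := by
  rw [sheet, sheet, deck_apply, add_div, mul_div_cancel_right₀ _ Real.two_pi_pos.ne',
    Int.floor_add_intCast]

/-- A lift to the strip of a reversible map of the cylinder isotopic to the identity, chosen so that
the lift itself is reversible with respect to `stripMirror`. -/
structure IsReversibleLift (φ : ℝ × Y → ℝ × Y) : Prop where
  isotopic : IsInjIsotopicToId φ
  map_deck : ∀ j w, φ (deck j w) = deck j (φ w)
  map_mirror_map : ∀ w, φ (stripMirror (φ w)) = stripMirror w

namespace IsReversibleLift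

variable {φ : ℝ × Y → ℝ × Y}

protected theorem iterate (hφ : IsReversibleLift φ) (n : ℕ) : IsReversibleLift φ^[n] where
  isotopic := hφ.isotopic.iterate n
  map_deck j w := (Semiconj.iterate_right (fun w => (hφ.map_deck j w).symm) n w).symm
  map_mirror_map := by
    induction n with
    | zero => exact fun _ => rfl
    | succ n ih =>
      intro w
      rw [iterate_succ_apply, iterate_succ_apply', hφ.map_mirror_map, ih]

theorem deck_comp (hφ : IsReversibleLift φ) (j : ℤ) : IsReversibleLift (deck j ∘ φ) where
  isotopic := (isInjIsotopicToId_deck j).comp hφ.isotopic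
  map_deck i w := by
    simp only [comp_apply, hφ.map_deck, deck_deck, add_comm]
  map_mirror_map w := by
    simp only [comp_apply, stripMirror_deck, hφ.map_deck, hφ.map_mirror_map, deck_deck,
      add_neg_cancel, deck_zero]

theorem mirror_conj (hφ : IsReversibleLift φ) :
    IsReversibleLift (stripMirror ∘ φ ∘ stripMirror) where
  isotopic := hφ.isotopic.conj_homeomorph stripMirror
  map_deck j w := by
    simp only [comp_apply, stripMirror_deck, hφ.map_deck, neg_neg]
  map_mirror_map w := by
    simp only [comp_apply, stripMirror_stripMirror, hφ.map_mirror_map]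

end IsReversibleLift

end Strip

section Heights

variable {a b : ℝ}

/-- The points of `[a, b]` other than its end points. -/
def innerHeights (a b : ℝ) : Set (Icc a b) := Subtype.val ⁻¹' Ioo a b

theorem isPreconnected_innerHeights : IsPreconnected (innerHeights a b) := by
  rw [← IsInducing.subtypeVal.isPreconnected_image, innerHeights, Subtype.image_preimage_val,
    inter_eq_right.2 Ioo_subset_Icc_self]
  exact isPreconnected_Ioo

theorem dense_innerHeights (hab : a < b) : Dense (innerHeights a b) := by
  rw [Subtype.dense_iff, innerHeights, Subtype.image_preimage_val,
    inter_eq_right.2 Ioo_subset_Icc_self, closure_Ioo hab.ne]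

/-- The strip `ℝ × [a, b]` as a subset of the complex plane. -/
def stripToComplex (w : ℝ × Icc a b) : ℂ := ⟨w.1, w.2⟩

theorem isEmbedding_stripToComplex : IsEmbedding (stripToComplex (a := a) (b := b)) :=
  Complex.equivRealProdCLM.symm.toHomeomorph.isEmbedding.comp
    (IsEmbedding.id.prodMap IsEmbedding.subtypeVal)

theorem stripToComplex_stripMirror (w : ℝ × Icc a b) :
    stripToComplex (stripMirror w) = -conj (stripToComplex w) := by
  apply Complex.ext <;> simp [stripToComplex]

theorem range_stripToComplex_mem_nhds {w : ℝ × Icc a b} (hw : w.2 ∈ innerHeights a b) :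
    range (stripToComplex (a := a) (b := b)) ∈ 𝓝 (stripToComplex w) := by
  filter_upwards [Complex.continuous_im.continuousAt.preimage_mem_nhds (Icc_mem_nhds hw.1 hw.2)]
    with z hz
  exact ⟨(z.re, ⟨z.im, hz⟩), rfl⟩

theorem IsInjIsotopicToId.snd_mem_innerHeights {φ : ℝ × Icc a b → ℝ × Icc a b}
    (hφ : IsInjIsotopicToId φ) {w : ℝ × Icc a b} (hw : w.2 ∈ innerHeights a b) :
    (φ w).2 ∈ innerHeights a b := by
  have hnhds := range_stripToComplex_mem_nhds hw
  obtain ⟨v, hv⟩ := hφ.exists_mul_re_sub_neg isEmbedding_stripToComplex hnhds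
    (neg_ne_zero.2 Complex.I_ne_zero)
  obtain ⟨v', hv'⟩ := hφ.exists_mul_re_sub_neg isEmbedding_stripToComplex hnhds Complex.I_ne_zero
  simp only [stripToComplex, Complex.mul_re, Complex.neg_re, Complex.neg_im, Complex.I_re,
    Complex.I_im, Complex.sub_im] at hv hv'
  constructor
  · linarith [(φ v).2.2.1]
  · linarith [(φ v').2.2.2]

theorem stripMirror_conj_axis_pos {φ : ℝ × Icc a b → ℝ × Icc a b}
    (hneg : ∀ r ∈ innerHeights a b, (φ (0, r)).1 < 0) :
    ∀ r ∈ innerHeights a b, 0 < ((stripMirror ∘ φ ∘ stripMirror) (0, r)).1 := fun r hr => by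
  simpa using hneg r hr

namespace IsReversibleLift

variable {φ : ℝ × Icc a b → ℝ × Icc a b}

theorem exists_fixed_of_fst_eq_zero (hφ : IsReversibleLift φ) {r : Icc a b}
    (hr : r ∈ innerHeights a b) (h : (φ (0, r)).1 = 0) :
    ∃ r' ∈ innerHeights a b, φ (0, r') = (0, r') := by
  have hr' := hφ.isotopic.snd_mem_innerHeights (w := (0, r)) hr
  have hmem : ∀ t : I, AffineMap.lineMap (r : ℝ) ((φ (0, r)).2 : ℝ) (t : ℝ) ∈ Ioo a b :=
    fun t => (convex_Ioo a b).lineMap_mem hr hr' t.2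
  let γ : I → ℝ × Icc a b := fun t => (0, ⟨_, Ioo_subset_Icc_self (hmem t)⟩)
  have hγ : Continuous γ := by fun_prop
  have hγ0 : γ 0 = (0, r) := by simp [γ]
  have hγ1 : γ 1 = φ (0, r) := Prod.ext h.symm (by simp [γ])
  obtain ⟨t, ht⟩ := hφ.isotopic.exists_fixed_mem_path stripMirror.continuous
    isEmbedding_stripToComplex.continuous isEmbedding_stripToComplex.injective
    stripToComplex_stripMirror hφ.map_mirror_map hγ (fun t => by simp [γ]) (by rw [hγ0, hγ1])
  exact ⟨_, hmem t, ht⟩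

theorem axis_pos_or_neg (hφ : IsReversibleLift φ)
    (hfix : ∀ r ∈ innerHeights a b, φ (0, r) ≠ (0, r)) :
    (∀ r ∈ innerHeights a b, 0 < (φ (0, r)).1) ∨ ∀ r ∈ innerHeights a b, (φ (0, r)).1 < 0 := by
  by_contra! ⟨⟨r, hr, hle⟩, r', hr', hge⟩
  have hcont := hφ.isotopic.continuous
  obtain ⟨s, hs, h0⟩ := isPreconnected_innerHeights.intermediate_value hr hr'
    (f := fun r => (φ (0, r)).1) (by fun_prop) ⟨hle, hge⟩
  obtain ⟨s', hs', hfixed⟩ := hφ.exists_fixed_of_fst_eq_zero hs h0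
  exact hfix s' hs' hfixed

/-- If `v` in the half strip had its image on the axis, then `φ (φ v)` would be the mirror image
of `v`, in the other half strip. -/
theorem fst_pos_of_axis_pos (hφ : IsReversibleLift φ)
    (hpos : ∀ r ∈ innerHeights a b, 0 < (φ (0, r)).1) {w : ℝ × Icc a b} (hw : 0 ≤ w.1)
    (hr : w.2 ∈ innerHeights a b) : 0 < (φ w).1 := by
  by_contra! hle
  have hcont := hφ.isotopic.continuous
  obtain ⟨v, ⟨hv, hvr⟩, h0⟩ :=
    ((isPreconnected_Ici (a := (0 : ℝ))).prod isPreconnected_innerHeights).intermediate_value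
      (a := w) (b := (0, w.2)) ⟨hw, hr⟩ ⟨mem_Ici.2 le_rfl, hr⟩ (f := fun w => (φ w).1) (by fun_prop)
      ⟨hle, (hpos _ hr).le⟩
  have hφv : φ v = (0, (φ v).2) := Prod.ext h0 rfl
  have hφφv : φ (φ v) = stripMirror v := by
    rw [← hφ.map_mirror_map v, hφv, stripMirror_apply, neg_zero]
  have := hpos _ (hφ.isotopic.snd_mem_innerHeights hvr)
  rw [← hφv, hφφv, stripMirror_apply] at this
  linarith [mem_Ici.1 hv]

theorem fst_nonneg_of_axis_pos (hφ : IsReversibleLift φ) (hab : a < b)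
    (hpos : ∀ r ∈ innerHeights a b, 0 < (φ (0, r)).1) {w : ℝ × Icc a b} (hw : 0 ≤ w.1) :
    0 ≤ (φ w).1 := by
  have hcont := hφ.isotopic.continuous
  have hclosed : IsClosed {r | 0 ≤ (φ (w.1, r)).1} :=
    isClosed_le continuous_const (by fun_prop)
  exact hclosed.closure_subset_iff.2
    (fun r hr => (hφ.fst_pos_of_axis_pos hpos (w := (w.1, r)) hw hr).le)
    (dense_innerHeights hab w.2)

theorem fst_nonpos_of_axis_neg (hφ : IsReversibleLift φ) (hab : a < b)
    (hneg : ∀ r ∈ innerHeights a b, (φ (0, r)).1 < 0) {w : ℝ × Icc a b} (hw : w.1 ≤ 0) :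
    (φ w).1 ≤ 0 := by
  simpa using hφ.mirror_conj.fst_nonneg_of_axis_pos hab (stripMirror_conj_axis_pos hneg)
    (w := stripMirror w) (neg_nonneg.2 hw)

theorem sheet_le_sheet_map (hφ : IsReversibleLift φ) (hab : a < b)
    (hpos : ∀ r ∈ innerHeights a b, 0 < (φ (0, r)).1) (w : ℝ × Icc a b) :
    sheet w ≤ sheet (φ w) := by
  rw [le_sheet_iff, ← hφ.map_deck]
  exact hφ.fst_nonneg_of_axis_pos hab hpos (le_sheet_iff.1 le_rfl)

theorem sheet_map_le_sheet_add_one (hφ : IsReversibleLift φ) (hab : a < b)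
    (hneg : ∀ r ∈ innerHeights a b, (φ (0, r)).1 < 0) (w : ℝ × Icc a b) :
    sheet (φ w) ≤ sheet w + 1 := by
  by_contra! hlt
  have hw : (deck (-(sheet w + 1)) w).1 < 0 := not_le.1 (le_sheet_iff.not.1 (by lia))
  have hφw : 0 ≤ (deck (-(sheet w + 2)) (φ w)).1 := le_sheet_iff.1 (by lia)
  have hle := hφ.fst_nonpos_of_axis_neg hab hneg hw.le
  rw [hφ.map_deck] at hle
  simp only [deck_apply] at hφw hle
  push_cast at hφw hle
  linarith [Real.two_pi_pos]

/-- The lift `deck (-1) ∘ φ` has no fixed point on the axis and moves `w₀` to the left, so it moves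
the whole axis to the left. -/
theorem sheet_map_le_sheet_add_two (hφ : IsReversibleLift φ) (hab : a < b) {w₀ : ℝ × Icc a b}
    (hw₀ : φ w₀ = w₀) (hne : ∀ r ∈ innerHeights a b, φ (0, r) ≠ deck 1 (0, r))
    (w : ℝ × Icc a b) : sheet (φ w) ≤ sheet w + 2 := by
  have hχ := hφ.deck_comp (-1)
  have hfix : ∀ r ∈ innerHeights a b, (deck (-1) ∘ φ) (0, r) ≠ (0, r) := fun r hr h =>
    hne r hr <| by rw [← congrArg (deck 1) h, comp_apply, deck_deck, add_neg_cancel, deck_zero]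
  rcases hχ.axis_pos_or_neg hfix with hpos | hneg
  · have := hχ.sheet_le_sheet_map hab hpos w₀
    rw [comp_apply, hw₀, sheet_deck] at this
    lia
  · have := hχ.sheet_map_le_sheet_add_one hab hneg w
    rw [comp_apply, sheet_deck] at this
    lia

end IsReversibleLift

end Heights

/-! ### Regional recurrence -/

/-- Every nonempty open set is visited infinitely often by some forward orbit: the topological
consequence of the conservation of a finite measure with full support. -/
def IsRegionallyRecurrent {X : Type*} [TopologicalSpace X] (g : X → X) : Prop :=
  ∀ U, IsOpen U → U.Nonempty → ∃ x, ∃ᶠ n in atTop, g^[n] x ∈ U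

namespace IsRegionallyRecurrent

variable {X Y : Type*} [TopologicalSpace X] [TopologicalSpace Y] {g : X → X} {h : Y → Y}

theorem of_conservative [MeasurableSpace X] [OpensMeasurableSpace X] {μ : Measure X}
    [μ.IsOpenPosMeasure] (hg : Conservative g μ) : IsRegionallyRecurrent g := fun _ hU hne =>
  have ⟨x, _, hx⟩ := (hg.frequently_ae_mem_and_frequently_image_mem
    hU.measurableSet.nullMeasurableSet (hU.measure_pos μ hne).ne').exists
  ⟨x, hx⟩

theorem of_semiconj (hg : IsRegionallyRecurrent g) {p : X → Y} (hp : Continuous p)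
    (hsurj : Surjective p) (hgh : Semiconj p g h) : IsRegionallyRecurrent h := fun U hU hne => by
  obtain ⟨x, hx⟩ := hg _ (hU.preimage hp) (hne.preimage hsurj)
  refine ⟨p x, hx.mono fun n hn => ?_⟩
  rwa [← hgh.iterate_right n x]

/-- Infinitely many of the return times lie in one residue class modulo `k`. -/
protected theorem iterate (hg : IsRegionallyRecurrent g) {k : ℕ} (hk : 0 < k) :
    IsRegionallyRecurrent g^[k] := fun U hU hne => by
  obtain ⟨x, hx⟩ := hg U hU hne
  by_contra! hno
  have hev : ∀ᶠ m in atTop, ∀ i < k, (g^[k])^[m] (g^[i] x) ∉ U :=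
    (finite_lt_nat k).eventually_all.2 fun i _ => hno (g^[i] x)
  refine hx <| ((Nat.tendsto_div_const_atTop hk.ne').eventually hev).mono fun n hn => ?_
  have := hn (n % k) (Nat.mod_lt n hk)
  rwa [← iterate_mul, ← iterate_add_apply, Nat.div_add_mod] at this

end IsRegionallyRecurrent

theorem tendsto_atTop_of_frequently_lt_succ {u : ℕ → ℤ} (hu : Monotone u)
    (hlt : ∃ᶠ n in atTop, u n < u (n + 1)) : Tendsto u atTop atTop := by
  refine tendsto_atTop_atTop_of_monotone hu fun c => ?_
  have hsurpass : ∀ k : ℕ, ∃ n, u 0 + k ≤ u n := fun k => by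
    induction k with
    | zero => exact ⟨0, by simp⟩
    | succ k ih =>
      obtain ⟨m, hm⟩ := ih
      obtain ⟨n, hmn, hn⟩ := frequently_atTop.1 hlt m
      exact ⟨n + 1, by have := hu hmn; push_cast; lia⟩
  obtain ⟨n, hn⟩ := hsurpass (c - u 0).toNat
  exact ⟨n, by lia⟩

/-! ### Lifts from the cylinder -/

section Cylinder

variable {Y : Type*}

/-- The universal cover of the cylinder `Circle × Y`. -/
def cylinderCover : ℝ × Y → Circle × Y := Prod.map Circle.exp id

theorem cylinderCover_zero (y : Y) : cylinderCover (0, y) = (1, y) :=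
  Prod.ext Circle.exp_zero rfl

theorem surjective_cylinderCover : Surjective (cylinderCover (Y := Y)) :=
  Circle.exp_surjective.prodMap surjective_id

variable [TopologicalSpace Y]

/-- The reflection of the cylinder that fixes the generators over `1` and `-1`. -/
def cylinderMirror : Circle × Y ≃ₜ Circle × Y := (Homeomorph.inv Circle).prodCongr (.refl Y)

theorem cylinderMirror_cylinderMirror (z : Circle × Y) :
    cylinderMirror (cylinderMirror z) = z :=
  Prod.ext (inv_inv z.1) rfl

theorem cylinderMirror_one (y : Y) : cylinderMirror (1, y) = (1, y) :=
  Prod.ext inv_one rfl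

theorem continuous_cylinderCover : Continuous (cylinderCover (Y := Y)) :=
  Circle.exp.continuous.prodMap continuous_id

theorem isOpenMap_cylinderCover : IsOpenMap (cylinderCover (Y := Y)) :=
  Circle.isCoveringMap_exp.isOpenMap.prodMap IsOpenMap.id

theorem cylinderCover_eq_iff {w w' : ℝ × Y} :
    cylinderCover w = cylinderCover w' ↔ ∃ j, w = deck j w' := by
  simp only [cylinderCover, Prod.map, id, Prod.ext_iff, Circle.exp_eq_exp, deck_apply,
    exists_and_right]

theorem cylinderCover_deck (j : ℤ) (w : ℝ × Y) : cylinderCover (deck j w) = cylinderCover w :=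
  cylinderCover_eq_iff.2 ⟨j, rfl⟩

theorem cylinderCover_stripMirror (w : ℝ × Y) :
    cylinderCover (stripMirror w) = cylinderMirror (cylinderCover w) :=
  Prod.ext (Circle.exp_neg w.1) rfl

theorem IsInjIsotopicToId.exists_lift {f : Circle × Y → Circle × Y} (hf : IsInjIsotopicToId f) :
    ∃ φ : ℝ × Y → ℝ × Y, IsInjIsotopicToId φ ∧ Semiconj cylinderCover φ f ∧
      ∀ j w, φ (deck j w) = deck j (φ w) := by
  obtain ⟨H, hH, hinj, hH0, hH1⟩ := hf
  let R : C(I × (Circle × Y), Circle) := ⟨fun p => (H p).1 / p.2.1, by fun_prop⟩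
  have hR0 : ∀ z, R (0, z) = Circle.exp ((ContinuousMap.const (Circle × Y) (0 : ℝ)) z) :=
    fun z => by simp [R, hH0]
  let D := Circle.isCoveringMap_exp.liftHomotopy R (.const _ 0) hR0
  have hD0 : ∀ z, D (0, z) = 0 := Circle.isCoveringMap_exp.liftHomotopy_zero R _ hR0
  have hexpD : ∀ p, Circle.exp (D p) = (H p).1 / p.2.1 :=
    congrFun (Circle.isCoveringMap_exp.liftHomotopy_lifts R _ hR0)
  let F : I × (ℝ × Y) → ℝ × Y := fun p =>
    (p.2.1 + D (p.1, cylinderCover p.2), (H (p.1, cylinderCover p.2)).2)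
  have hcover : ∀ s w, cylinderCover (F (s, w)) = H (s, cylinderCover w) := fun s w => by
    refine Prod.ext ?_ rfl
    change Circle.exp (w.1 + D (s, cylinderCover w)) = _
    rw [Circle.exp_add, hexpD]
    exact mul_div_cancel _ _
  have hp := continuous_cylinderCover (Y := Y)
  refine ⟨fun w => F (1, w), ⟨F, by fun_prop, fun s w w' h => ?_, fun w => ?_, fun _ => rfl⟩,
    fun w => (hcover 1 w).trans (hH1 _), fun j w => ?_⟩
  · have hww' : cylinderCover w = cylinderCover w' := hinj s <| by
      simpa only [hcover] using congrArg cylinderCover h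
    refine Prod.ext ?_ (congrArg Prod.snd hww' :)
    simpa only [F, hww', add_left_inj] using congrArg Prod.fst h
  · simp only [F, hD0, hH0, add_zero]; rfl
  · simp only [F, cylinderCover_deck]
    exact Prod.ext (add_right_comm _ _ _) rfl

/-- The lift of the identity `φ ∘ stripMirror ∘ φ ∘ stripMirror` is a deck transformation, which
commutes with `φ` and with its own conjugate by `φ ∘ stripMirror`, its inverse. -/
theorem IsInjIsotopicToId.isReversibleLift [PreconnectedSpace Y] {f : Circle × Y → Circle × Y}
    (hrev : ∀ z, f (cylinderMirror (f z)) = cylinderMirror z) {φ : ℝ × Y → ℝ × Y}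
    (hφ : IsInjIsotopicToId φ) (hφf : Semiconj cylinderCover φ f)
    (hdeck : ∀ j w, φ (deck j w) = deck j (φ w)) : IsReversibleLift φ := by
  refine ⟨hφ, hdeck, fun w => ?_⟩
  have hφc := hφ.continuous
  have hlift : ∀ v, ∃ j, φ (stripMirror (φ v)) = deck j (stripMirror v) := fun v =>
    cylinderCover_eq_iff.1 <| by
      rw [hφf, cylinderCover_stripMirror, hφf, hrev, cylinderCover_stripMirror]
  choose j hj using hlift
  have hturn : ∀ v, (φ (stripMirror (φ v))).1 + v.1 = j v * (2 * Real.pi) := fun v => by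
    rw [hj, deck_apply, stripMirror_apply]; ring
  have hconst : ∀ v, j v = j w := fun v => by
    have := Circle.isCoveringMap_exp.const_of_comp
      (g := fun v => (φ (stripMirror (φ v))).1 + v.1) (by fun_prop)
      (fun u v => by rw [hturn, hturn, Circle.exp_int_mul_two_pi, Circle.exp_int_mul_two_pi]) v w
    rw [hturn, hturn] at this
    exact_mod_cast mul_right_cancel₀ Real.two_pi_pos.ne' this
  have hj_neg : j w = -j w := by
    have := hj (stripMirror (φ w))
    rw [hconst (stripMirror (φ w)), hj w, stripMirror_deck, stripMirror_stripMirror, hdeck,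
      stripMirror_stripMirror] at this
    exact (deck_left_inj.1 this).symm
  rw [hj, show j w = 0 by lia, deck_zero]

end Cylinder

/-! ### Reversible maps of the cylinder -/

section CylinderTheorem

variable {a b : ℝ} {φ : ℝ × Icc a b → ℝ × Icc a b} {g : Circle × Icc a b → Circle × Icc a b}

/-- A point which returns infinitely often to the image of a region that `φ` carries across the
axis climbs one sheet at each visit, and never comes down again. -/
theorem IsReversibleLift.exists_tendsto_sheet_atTop (hφ : IsReversibleLift φ) (hab : a < b)
    (hφg : Semiconj cylinderCover φ g) (hg : IsRegionallyRecurrent g)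
    (hpos : ∀ r ∈ innerHeights a b, 0 < (φ (0, r)).1) :
    ∃ w, Tendsto (fun n => sheet (φ^[n] w)) atTop atTop := by
  have hφc := hφ.isotopic.continuous
  let W : Set (ℝ × Icc a b) := {w | w.1 < 0 ∧ 0 < (φ w).1}
  have hWo : IsOpen W :=
    (isOpen_Iio.preimage continuous_fst).inter (isOpen_Ioi.preimage (continuous_fst.comp hφc))
  have hWne : W.Nonempty := by
    have : Nonempty (Icc a b) := ⟨a, left_mem_Icc.2 hab.le⟩
    obtain ⟨r, hr⟩ := (dense_innerHeights hab).nonempty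
    have hcont : Continuous fun x : ℝ => (φ (x, r)).1 := by fun_prop
    have hev := hcont.continuousAt.eventually_const_lt (hpos r hr)
    obtain ⟨x, hx, hx0⟩ := ((hev.filter_mono nhdsWithin_le_nhds).and self_mem_nhdsWithin).exists
      (f := 𝓝[<] (0 : ℝ))
    exact ⟨(x, r), hx0, hx⟩
  obtain ⟨z, hz⟩ := hg _ (isOpenMap_cylinderCover W hWo) (hWne.image _)
  obtain ⟨w, rfl⟩ := surjective_cylinderCover z
  refine ⟨w, tendsto_atTop_of_frequently_lt_succ (monotone_nat_of_le_succ fun n => ?_)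
    (hz.mono ?_)⟩
  · rw [iterate_succ_apply']
    exact hφ.sheet_le_sheet_map hab hpos _
  · rintro n ⟨v, ⟨hv, hφv⟩, hvn⟩
    rw [← hφg.iterate_right n w, eq_comm, cylinderCover_eq_iff] at hvn
    obtain ⟨j, hj⟩ := hvn
    have hv_sheet := sheet_nonneg_iff.not.2 (not_le.2 hv)
    have hφv_sheet := sheet_nonneg_iff.2 hφv.le
    rw [iterate_succ_apply', hj, hφ.map_deck, sheet_deck, sheet_deck]
    lia

theorem IsReversibleLift.exists_odd_iterate_eq_of_axis_pos (hφ : IsReversibleLift φ) (hab : a < b)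
    (hφg : Semiconj cylinderCover φ g) (hg : IsRegionallyRecurrent g)
    (hpos : ∀ r ∈ innerHeights a b, 0 < (φ (0, r)).1) {w₀ : ℝ × Icc a b} (hw₀ : φ w₀ = w₀) :
    ∃ r ∈ innerHeights a b, ∃ n, Odd n ∧ g^[n] (1, r) = (1, r) := by
  obtain ⟨w, hw⟩ := hφ.exists_tendsto_sheet_atTop hab hφg hg hpos
  obtain ⟨N, hN⟩ := eventually_atTop.1 (hw.eventually_gt_atTop (sheet w + 2))
  by_contra! hne
  have hodd := odd_two_mul_add_one N
  have hbound := (hφ.iterate (2 * N + 1)).sheet_map_le_sheet_add_two hab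
    (iterate_fixed hw₀ _) (fun r hr h => hne r hr _ hodd ?_) w
  · exact (hN _ (by lia)).not_ge hbound
  · rw [← cylinderCover_zero, ← hφg.iterate_right, h, cylinderCover_deck]

theorem IsReversibleLift.exists_odd_iterate_eq (hφ : IsReversibleLift φ) (hab : a < b)
    (hφg : Semiconj cylinderCover φ g) (hg : IsRegionallyRecurrent g) {w₀ : ℝ × Icc a b}
    (hw₀ : φ w₀ = w₀) : ∃ r ∈ innerHeights a b, ∃ n, Odd n ∧ g^[n] (1, r) = (1, r) := by
  by_cases hfix : ∃ r ∈ innerHeights a b, φ (0, r) = (0, r)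
  · obtain ⟨r, hr, hφr⟩ := hfix
    exact ⟨r, hr, 1, odd_one, by rw [iterate_one, ← cylinderCover_zero, ← hφg, hφr]⟩
  push Not at hfix
  rcases hφ.axis_pos_or_neg hfix with hpos | hneg
  · exact hφ.exists_odd_iterate_eq_of_axis_pos hab hφg hg hpos hw₀
  · have hmirror : Semiconj cylinderMirror g (cylinderMirror ∘ g ∘ cylinderMirror) := fun z => by
      simp only [comp_apply, cylinderMirror_cylinderMirror]
    obtain ⟨r, hr, n, hn, hnr⟩ := hφ.mirror_conj.exists_odd_iterate_eq_of_axis_pos hab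
      (g := cylinderMirror ∘ g ∘ cylinderMirror)
      (fun w => by simp only [comp_apply, cylinderCover_stripMirror, hφg _])
      (hg.of_semiconj cylinderMirror.continuous cylinderMirror.surjective hmirror)
      (stripMirror_conj_axis_pos hneg) (w₀ := stripMirror w₀)
      (by simp only [comp_apply, stripMirror_stripMirror, hw₀])
    refine ⟨r, hr, n, hn, cylinderMirror.injective ?_⟩
    rw [hmirror.iterate_right n, cylinderMirror_one, hnr]

theorem exists_odd_iterate_eq_of_reversible (hab : a < b) {f : Circle × Icc a b → Circle × Icc a b}
    (hf : IsInjIsotopicToId f) (hrev : ∀ z, f (cylinderMirror (f z)) = cylinderMirror z)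
    (hrec : IsRegionallyRecurrent f) {z : Circle × Icc a b} {k : ℕ} (hk : Odd k)
    (hz : f^[k] z = z) :
    ∃ r ∈ innerHeights a b, ∃ n, Odd n ∧ f^[n] (1, r) = (1, r) := by
  have : PreconnectedSpace (Icc a b) := isPreconnected_iff_preconnectedSpace.1 isPreconnected_Icc
  obtain ⟨φ, hφ, hφf, hdeck⟩ := hf.exists_lift
  have hφk := (hφ.isReversibleLift hrev hφf hdeck).iterate k
  have hφfk := hφf.iterate_right k
  obtain ⟨w, rfl⟩ := surjective_cylinderCover z
  obtain ⟨j, hj⟩ := cylinderCover_eq_iff.1 ((hφfk w).trans hz)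
  obtain ⟨r, hr, n, hn, hnr⟩ := (hφk.deck_comp (-j)).exists_odd_iterate_eq hab
    (fun v => (cylinderCover_deck _ _).trans (hφfk v)) (hrec.iterate hk.pos)
    (w₀ := w) (by rw [comp_apply, hj, deck_deck, neg_add_cancel, deck_zero])
  exact ⟨r, hr, k * n, hk.mul hn, by rw [iterate_mul, hnr]⟩

end CylinderTheorem

/-! ### The annulus -/

/-- The complex coordinate `y + i x` of the plane, in which `refl2` is the complex conjugation. -/
def planeToComplex : ℝ × ℝ ≃ₜ ℂ :=
  (Homeomorph.prodComm ℝ ℝ).trans Complex.equivRealProdCLM.symm.toHomeomorph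

theorem norm_planeToComplex (p : ℝ × ℝ) : ‖planeToComplex p‖ = enorm2 p := by
  rw [Complex.norm_eq_sqrt_sq_add_sq, enorm2, add_comm]
  rfl

theorem planeToComplex_refl2 (p : ℝ × ℝ) :
    planeToComplex (refl2 p) = conj (planeToComplex p) :=
  rfl

theorem continuous_enorm2 : Continuous enorm2 :=
  planeToComplex.continuous.norm.congr norm_planeToComplex

theorem enorm2_pos_of_mem_annulus {p : ℝ × ℝ} (hp : p ∈ annulus) : 0 < enorm2 p :=
  one_pos.trans_le hp.1

theorem enorm2_planeToComplex_symm (c : Circle) {r : ℝ} (hr : 0 ≤ r) :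
    enorm2 (planeToComplex.symm (r * c)) = r := by
  rw [← norm_planeToComplex, planeToComplex.apply_symm_apply, norm_mul, Circle.norm_coe, mul_one,
    Complex.norm_real, Real.norm_of_nonneg hr]

/-- Polar coordinates, with the angle measured from the axis of the reflection `refl2`. -/
def annulusHomeo : annulus ≃ₜ Circle × Icc (1 : ℝ) 2 where
  toFun z := (⟨planeToComplex z / enorm2 z, mem_sphere_zero_iff_norm.2 <| by
    have hz := enorm2_pos_of_mem_annulus z.2
    rw [norm_div, norm_planeToComplex, Complex.norm_real, Real.norm_of_nonneg hz.le,
      div_self hz.ne']⟩, ⟨enorm2 z, z.2⟩)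
  invFun p := ⟨planeToComplex.symm ((p.2 : ℝ) * p.1), by
    rw [annulus, mem_ofPred_eq, enorm2_planeToComplex_symm _ (zero_le_one.trans p.2.2.1)]
    exact p.2.2⟩
  left_inv z := Subtype.ext <| planeToComplex.symm_apply_eq.2 <| by
    exact mul_div_cancel₀ _ (Complex.ofReal_ne_zero.2 (enorm2_pos_of_mem_annulus z.2).ne')
  right_inv p := by
    have hr : (0 : ℝ) < p.2 := one_pos.trans_le p.2.2.1
    have henorm := enorm2_planeToComplex_symm p.1 hr.le
    refine Prod.ext (Circle.ext ?_) (Subtype.ext henorm)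
    simp [henorm, hr.ne']
  continuous_toFun := by
    have := continuous_enorm2
    have hne : ∀ z : annulus, (enorm2 z : ℂ) ≠ 0 := fun z =>
      Complex.ofReal_ne_zero.2 (enorm2_pos_of_mem_annulus z.2).ne'
    fun_prop (disch := exact hne _)
  continuous_invFun := by fun_prop

theorem annulusHomeo_IA (z : annulus) :
    annulusHomeo (IA z) = cylinderMirror (annulusHomeo z) := by
  refine Prod.ext (Circle.ext ?_) (Subtype.ext (enorm2_refl2 z))
  change planeToComplex (refl2 z) / (enorm2 (refl2 z) : ℂ) = _
  rw [planeToComplex_refl2, enorm2_refl2]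
  refine Eq.trans ?_ (Circle.coe_inv_eq_conj (annulusHomeo z).1).symm
  change _ = conj (planeToComplex z / (enorm2 z : ℂ))
  rw [map_div₀, Complex.conj_ofReal]

theorem mem_annulusInt_iff {z : annulus} :
    (z : ℝ × ℝ) ∈ annulusInt ↔ (annulusHomeo z).2 ∈ innerHeights 1 2 :=
  Iff.rfl

instance : CompactSpace annulus := annulusHomeo.symm.compactSpace

theorem annulus_subset_closure_interior : annulus ⊆ closure (interior annulus) := by
  have hopen : IsOpen annulusInt :=
    (isOpen_lt continuous_const continuous_enorm2).inter
      (isOpen_lt continuous_enorm2 continuous_const)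
  have hsub : annulusInt ⊆ interior annulus :=
    interior_maximal (fun p hp => ⟨hp.1.le, hp.2.le⟩) hopen
  have hdense : Dense (annulusHomeo ⁻¹' (univ ×ˢ innerHeights 1 2)) :=
    (dense_univ.prod (dense_innerHeights one_lt_two)).preimage annulusHomeo.isOpenMap
  refine (Subtype.dense_iff.1 hdense).trans (closure_mono ?_)
  rintro _ ⟨z, hz, rfl⟩
  exact hsub (mem_annulusInt_iff.2 hz.2)

theorem isOpenPosMeasure_comap_subtypeVal {X : Type*} [TopologicalSpace X] [MeasurableSpace X]
    {μ : Measure X} [μ.IsOpenPosMeasure] {s : Set X} (hs : MeasurableSet s)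
    (hsub : s ⊆ closure (interior s)) :
    (μ.comap (Subtype.val : s → X)).IsOpenPosMeasure where
  open_pos := by
    rintro _ ⟨V, hV, rfl⟩ ⟨x, hx⟩ hzero
    have hne : (V ∩ interior s).Nonempty := mem_closure_iff.1 (hsub x.2) V hV hx
    rw [comap_subtype_coe_apply hs, Subtype.image_preimage_coe] at hzero
    refine ((hV.inter isOpen_interior).measure_pos μ hne).ne' (measure_mono_null ?_ hzero)
    exact fun y hy => ⟨interior_subset hy.2, hy.1⟩

theorem isRegionallyRecurrent_of_measurePreserving {f : annulus → annulus}
    (hf : MeasurePreserving f ((volume : Measure (ℝ × ℝ)).comap Subtype.val)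
      ((volume : Measure (ℝ × ℝ)).comap Subtype.val)) : IsRegionallyRecurrent f := by
  have hmeas : MeasurableSet annulus := (isCompact_iff_compactSpace.2 inferInstance).measurableSet
  have := isOpenPosMeasure_comap_subtypeVal (μ := volume) hmeas
    annulus_subset_closure_interior
  have := IsFiniteMeasureOnCompacts.comap' (volume : Measure (ℝ × ℝ)) continuous_subtype_val
    (MeasurableEmbedding.subtype_coe hmeas)
  exact .of_conservative hf.conservative

theorem IsotopicToId.isInjIsotopicToId {Ω : Set (ℝ × ℝ)} {f : Ω ≃ₜ Ω} (hf : IsotopicToId f) :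
    IsInjIsotopicToId f := by
  obtain ⟨H, hH, hhomeo, hH0, hH1⟩ := hf
  refine ⟨H, hH, fun s => ?_, hH0, hH1⟩
  obtain ⟨e, he⟩ := hhomeo s
  exact (funext he : (fun z => H (s, z)) = e) ▸ e.injective

theorem odd_periodic_point_gives_interior_symmetric_odd_periodic_point_general
    (f : annulus ≃ₜ annulus) (hrev : ∀ z, f (IA z) = IA (f.symm z))
    (hrec : IsRegionallyRecurrent f) (hiso : IsInjIsotopicToId f)
    (hodd : ∃ (z : annulus) (k : ℕ), Odd k ∧ f^[k] z = z) :
    ∃ z : annulus, (z : ℝ × ℝ) ∈ annulusInt ∧ IA z = z ∧ ∃ k, Odd k ∧ f^[k] z = z := by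
  obtain ⟨z, k, hk, hkz⟩ := hodd
  let g := annulusHomeo ∘ f ∘ annulusHomeo.symm
  have hfg : Semiconj annulusHomeo f g := fun w => by
    simp only [g, comp_apply, annulusHomeo.symm_apply_apply]
  have hg_rev : ∀ w, g (cylinderMirror (g w)) = cylinderMirror w := annulusHomeo.surjective.forall.2
    fun w => by
      rw [← hfg, ← annulusHomeo_IA, ← hfg, hrev, f.symm_apply_apply, annulusHomeo_IA]
  obtain ⟨r, hr, n, hn, hnr⟩ := exists_odd_iterate_eq_of_reversible one_lt_two
    (hiso.conj_homeomorph annulusHomeo) hg_rev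
    (hrec.of_semiconj annulusHomeo.continuous annulusHomeo.surjective hfg) hk
    ((hfg.iterate_right k z).symm.trans (congrArg annulusHomeo hkz))
  refine ⟨annulusHomeo.symm (1, r), mem_annulusInt_iff.2 ?_, annulusHomeo.injective ?_, n, hn,
    annulusHomeo.injective ?_⟩
  · rwa [annulusHomeo.apply_symm_apply]
  · rw [annulusHomeo_IA, annulusHomeo.apply_symm_apply, cylinderMirror_one]
  · rw [hfg.iterate_right n, annulusHomeo.apply_symm_apply, hnr]

/-- **Proposition 5.4.** If an area preserving reversible homeomorphism of the
closed annulus isotopic to the identity has an odd-periodic point, then it has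
an interior symmetric odd-periodic point. -/
theorem odd_periodic_point_gives_interior_symmetric_odd_periodic_point
    (f : annulus ≃ₜ annulus)
    (hrev : ∀ z : annulus, f (IA z) = IA (f.symm z))
    (harea : MeasurePreserving f
      ((volume : Measure (ℝ × ℝ)).comap (Subtype.val : annulus → ℝ × ℝ))
      ((volume : Measure (ℝ × ℝ)).comap (Subtype.val : annulus → ℝ × ℝ)))
    (hiso : IsotopicToId f)
    (hodd : ∃ (z : annulus) (k : ℕ), Odd k ∧ 1 ≤ k ∧ (⇑f)^[k] z = z) :
    ∃ z : annulus, (z : ℝ × ℝ) ∈ annulusInt ∧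
      (∃ k : ℕ, Odd k ∧ 1 ≤ k ∧ (⇑f)^[k] z = z) ∧
      (∃ l : ℕ, 1 ≤ l ∧ (⇑f)^[l] z = IA z) := by
  obtain ⟨w, m, hm, -, hmw⟩ := hodd
  obtain ⟨z, hz, hIz, k, hk, hkz⟩ :=
    odd_periodic_point_gives_interior_symmetric_odd_periodic_point_general f hrev
      (isRegionallyRecurrent_of_measurePreserving harea) hiso.isInjIsotopicToId ⟨w, m, hm, hmw⟩
  exact ⟨z, hz, ⟨k, hk, hk.pos, hkz⟩, k, hk.pos, hkz.trans hIz.symm⟩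
end
end
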